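/- Let G = (V, E, x) be a finite connected rooted graph with conductances λ ∈ (0,∞)^E, let yz ∈ E be an edge, let G* be the graph G with the edge yz removed, and let λ* be the restriction of λ to the edges of G* (if removing yz disconnects a vertex from the root, its variance under G* is set to +∞). Then for every vertex i ∈ V, Var^{IV-GFF}_{G,λ}[φ(i)] ≤ Var^{IV-GFF}_{G*,λ*}[φ(i)], and for every pair of vertices i,j ∈ V, Var^{IV-GFF}_{G,λ}[φ(i) − φ(j)] ≤ Var^{IV-GFF}_{G*,λ*}[φ(i) − φ(j)]. -/

import Mathlib

open scoped ENNReal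

noncomputable section

/-- The graph on `V` whose edges are the pairs of distinct vertices carrying a positive
conductance. -/
def supportGraph {V : Type*} (c : V → V → ℝ) : SimpleGraph V :=
  SimpleGraph.fromRel (fun a b => 0 < c a b)

/-- Configurations of the integer-valued Gaussian free field on the rooted graph with
conductances `c` and root `x`: integer-valued height functions vanishing at the root and
(by convention) outside the connected component of the root. -/
def GffConfig {V : Type*} (c : V → V → ℝ) (x : V) : Type _ :=
  {φ : V → ℤ // φ x = 0 ∧ ∀ v : V, ¬ (supportGraph c).Reachable x v → φ v = 0}

/-- Boltzmann weight `exp(−∑_{ij∈E} λ_{ij}(φ(i)−φ(j))²)` of a configuration (each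
unordered pair is counted once, whence the factor `1/2` in the ordered sum). -/
def gffWeight {V : Type*} [Fintype V] (c : V → V → ℝ) (φ : V → ℤ) : ℝ :=
  Real.exp (-((1 : ℝ) / 2 * ∑ i : V, ∑ j : V, c i j * ((φ i - φ j : ℤ) : ℝ) ^ 2))

/-- Partition function of the integer-valued Gaussian free field. -/
def gffZ {V : Type*} [Fintype V] (c : V → V → ℝ) (x : V) : ℝ :=
  ∑' φ : GffConfig c x, gffWeight c φ.val

/-- Variance of an observable `f` under the integer-valued Gaussian free field
(real-valued formula, meaningful on the connected component of the root). -/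
def gffRVar {V : Type*} [Fintype V] (c : V → V → ℝ) (x : V) (f : (V → ℤ) → ℝ) : ℝ :=
  (∑' φ : GffConfig c x, f φ.val ^ 2 * gffWeight c φ.val) / gffZ c x
    - ((∑' φ : GffConfig c x, f φ.val * gffWeight c φ.val) / gffZ c x) ^ 2

open scoped Classical in
/-- Variance of the height `φ(i)` under the integer-valued Gaussian free field, set to
`∞` when `i` is not connected to the root. -/
def gffVar1 {V : Type*} [Fintype V] (c : V → V → ℝ) (x : V) (i : V) : ℝ≥0∞ :=
  if (supportGraph c).Reachable x i then
    ENNReal.ofReal (gffRVar c x fun φ => ((φ i : ℤ) : ℝ))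
  else ⊤

open scoped Classical in
/-- Variance of the height difference `φ(i) − φ(j)` under the integer-valued Gaussian
free field, set to `∞` when `i` or `j` is not connected to the root. -/
def gffVar2 {V : Type*} [Fintype V] (c : V → V → ℝ) (x : V) (i j : V) : ℝ≥0∞ :=
  if (supportGraph c).Reachable x i ∧ (supportGraph c).Reachable x j then
    ENNReal.ofReal (gffRVar c x fun φ => ((φ i : ℤ) : ℝ) - ((φ j : ℤ) : ℝ))
  else ⊤

end

/-- The conductances obtained from `c` by deleting the edge `yz`. -/
noncomputable def deleteEdge {V : Type*} [DecidableEq V] (c : V → V → ℝ) (y z : V) :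
    V → V → ℝ :=
  fun a b => if (a = y ∧ b = z) ∨ (a = z ∧ b = y) then 0 else c a b

/-!
By the symmetry `φ ↦ -φ` the variance of an additive observable `X` is its second moment. Deleting
an edge `yz` lowers the energy by `t (φ y - φ z) ^ 2`. To compare second moments under energies
`H` and `H + t Y ^ 2`, where `H` is quadratic and `X`, `Y` are additive, take an independent pair
`(a, b)` and pass to `(α, β) = (a + b, a - b)`, which ranges over all pairs congruent modulo `2`.
The parallelogram law factorizes the weights, and the difference of the second moments becomes a
positive multiple of the sum of `g α * g β * sinh (t / 2 * (Y α * Y β))` over such pairs. Expanding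
`sinh` in its power series, whose coefficients are nonnegative, each term is a sum of squares over
the classes modulo `2`.

If the deletion disconnects the component of the root, the heights beyond the bridge, measured
relative to the height at its near end, are independent of the heights on the root's side, whose
law is that of the field with the edge removed.
-/

section PositiveKernels

variable {A P : Type*}

theorem sum_sum_ite_eq_mul_nonneg [DecidableEq P] (S : Finset A) (p : A → P) (g : A → ℝ) :
    0 ≤ ∑ a ∈ S, ∑ b ∈ S, if p a = p b then g a * g b else 0 := by
  have sum_sq_fibers : ∑ a ∈ S, ∑ b ∈ S, (if p a = p b then g a * g b else 0) =
      ∑ q ∈ S.image p, (∑ a ∈ S with p a = q, g a) ^ 2 := by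
    rw [← Finset.sum_fiberwise_of_maps_to (fun a ha => Finset.mem_image_of_mem p ha)]
    refine Finset.sum_congr rfl fun q _ => ?_
    rw [sq, Finset.sum_mul_sum]
    refine Finset.sum_congr rfl fun a ha => ?_
    rw [(Finset.mem_filter.mp ha).2, Finset.sum_filter]
    simp only [eq_comm]
  rw [sum_sq_fibers]
  positivity

theorem sum_sum_ite_eq_mul_sinh_nonneg [DecidableEq P] (S : Finset A) (p : A → P)
    (f Y : A → ℝ) {s : ℝ} (hs : 0 ≤ s) :
    0 ≤ ∑ a ∈ S, ∑ b ∈ S, if p a = p b then f a * f b * Real.sinh (s * (Y a * Y b)) else 0 := by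
  have series : HasSum (fun n : ℕ => ∑ a ∈ S, ∑ b ∈ S,
      if p a = p b then f a * f b * ((s * (Y a * Y b)) ^ (2 * n + 1) / (2 * n + 1).factorial)
        else 0)
      (∑ a ∈ S, ∑ b ∈ S,
        if p a = p b then f a * f b * Real.sinh (s * (Y a * Y b)) else 0) := by
    refine hasSum_sum fun a _ => hasSum_sum fun b _ => ?_
    split_ifs
    · exact (Real.hasSum_sinh _).mul_left _
    · exact hasSum_zero
  refine series.nonneg fun n => ?_
  calc 0 ≤ s ^ (2 * n + 1) / (2 * n + 1).factorial * ∑ a ∈ S, ∑ b ∈ S,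
        if p a = p b then (f a * Y a ^ (2 * n + 1)) * (f b * Y b ^ (2 * n + 1)) else 0 :=
        mul_nonneg (by positivity) (sum_sum_ite_eq_mul_nonneg S p _)
    _ = _ := by
        simp only [Finset.mul_sum, mul_ite, mul_zero]
        refine Finset.sum_congr rfl fun a _ => Finset.sum_congr rfl fun b _ => ?_
        congr 1
        ring

theorem hasSum_prod_self_nonneg {h : A × A → ℝ} {s : ℝ} (hs : HasSum h s)
    (hnn : ∀ S : Finset A, 0 ≤ ∑ a ∈ S, ∑ b ∈ S, h (a, b)) : 0 ≤ s := by
  have squares_cofinal : Filter.Tendsto (fun S : Finset A => S ×ˢ S) Filter.atTop Filter.atTop := by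
    classical
    refine Filter.tendsto_atTop_finset_of_monotone
      (fun S T hST => Finset.product_subset_product hST hST) fun q => ⟨{q.1, q.2}, ?_⟩
    simp
  refine ge_of_tendsto' (Filter.Tendsto.comp hs squares_cofinal) fun S => ?_
  simpa only [Function.comp_apply, Finset.sum_product] using hnn S

end PositiveKernels

section Rotation

variable {A : Type*} [AddCommGroup A]

theorem mem_range_add_sub_iff {α β : A} :
    (α, β) ∈ Set.range (fun q : A × A => (q.1 + q.2, q.1 - q.2)) ↔
      (α : A ⧸ (nsmulAddMonoidHom (α := A) 2).range) = β := by
  rw [QuotientAddGroup.eq]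
  simp only [Set.mem_range, Prod.mk.injEq, AddMonoidHom.mem_range, nsmulAddMonoidHom_apply,
    two_nsmul]
  constructor
  · rintro ⟨⟨a, b⟩, rfl, rfl⟩
    exact ⟨-b, by abel⟩
  · rintro ⟨d, hd⟩
    refine ⟨(α + d, -d), add_neg_cancel_right α d, ?_⟩
    rw [sub_neg_eq_add, add_assoc, hd, add_neg_cancel_left]

theorem add_sub_injective [IsAddTorsionFree A] :
    Function.Injective (fun q : A × A => (q.1 + q.2, q.1 - q.2)) := by
  rintro ⟨a, b⟩ ⟨a', b'⟩ h
  obtain ⟨hadd, hsub⟩ := Prod.mk.inj h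
  have two_nsmul_eq : 2 • a = 2 • a' := by
    calc 2 • a = (a + b) + (a - b) := by abel
      _ = (a' + b') + (a' - b') := by rw [hadd, hsub]
      _ = 2 • a' := by abel
  obtain rfl : a = a' := nsmul_right_injective two_ne_zero two_nsmul_eq
  exact congrArg (Prod.mk a) (add_left_cancel hadd)

open scoped Classical in
theorem hasSum_comp_add_sub_nonneg [IsAddTorsionFree A] {K : A → A → ℝ} {s : ℝ}
    (hs : HasSum (fun q : A × A => K (q.1 + q.2) (q.1 - q.2)) s)
    (hK : ∀ S : Finset A, 0 ≤ ∑ α ∈ S, ∑ β ∈ S,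
      if (α : A ⧸ (nsmulAddMonoidHom (α := A) 2).range) = β then K α β else 0) : 0 ≤ s := by
  let extension : A × A → ℝ := fun q =>
    if (q.1 : A ⧸ (nsmulAddMonoidHom (α := A) 2).range) = q.2 then K q.1 q.2 else 0
  have extension_sum : HasSum extension s := by
    refine (add_sub_injective.hasSum_iff fun q hq => ?_).mp (hs.congr_fun fun q => ?_)
    · exact if_neg (mem_range_add_sub_iff.not.mp hq)
    · exact if_pos (mem_range_add_sub_iff.mp ⟨q, rfl⟩)
  exact hasSum_prod_self_nonneg extension_sum hK

end Rotation

section GibbsMean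

/-- The expectation of the observable `F` under the Gibbs measure on the discrete space `A` with
energy `H`, that is, with weights proportional to `exp (-H)`. It is `0` when the partition
function diverges. -/
noncomputable def gibbsMean {A : Type*} (H F : A → ℝ) : ℝ :=
  (∑' a, F a * Real.exp (-H a)) / ∑' a, Real.exp (-H a)

theorem gibbsMean_comp_equiv {A B : Type*} (e : A ≃ B) (H F : B → ℝ) :
    gibbsMean (fun a => H (e a)) (fun a => F (e a)) = gibbsMean H F := by
  unfold gibbsMean
  rw [← e.tsum_eq, ← e.tsum_eq]

theorem gibbsMean_eq_zero_of_odd {A : Type*} [AddGroup A] {H F : A → ℝ}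
    (hH : H.Even) (hF : F.Odd) : gibbsMean H F = 0 := by
  have tsum_eq_neg : ∑' a, F a * Real.exp (-H a) = -∑' a, F a * Real.exp (-H a) := by
    rw [← tsum_neg, ← tsum_comp_neg]
    exact tsum_congr fun a => by rw [hH, hF, neg_mul]
  rw [gibbsMean, self_eq_neg.mp tsum_eq_neg, zero_div]

theorem tsum_exp_neg_pos {A : Type*} [Nonempty A] {H : A → ℝ}
    (hH : Summable fun a => Real.exp (-H a)) : 0 < ∑' a, Real.exp (-H a) :=
  hH.tsum_pos (fun _ => Real.exp_nonneg _) (Classical.arbitrary A) (Real.exp_pos _)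

theorem gibbsMean_prod_fst {A B : Type*} [Nonempty B] {H F : A → ℝ} {G : B → ℝ}
    (hH : Summable fun a => Real.exp (-H a)) (hF : Summable fun a => F a * Real.exp (-H a))
    (hG : Summable fun b => Real.exp (-G b)) :
    gibbsMean (fun q : A × B => H q.1 + G q.2) (fun q => F q.1) = gibbsMean H F := by
  simp only [gibbsMean, neg_add, Real.exp_add, ← mul_assoc]
  rw [← tsum_mul_tsum_of_summable_norm hF.norm hG.norm,
    ← tsum_mul_tsum_of_summable_norm hH.norm hG.norm,
    mul_div_mul_right _ _ (tsum_exp_neg_pos hG).ne']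

variable {A : Type*} [AddCommGroup A]

/-- The kernel whose values at `(a + b, a - b)` are, up to a factor `2`, the terms of the
double series for the difference of second moments of `X` under the energies `H` and
`H + t * Y ^ 2`. -/
noncomputable def rotatedKernel (H : A → ℝ) (X Y : A →+ ℝ) (t : ℝ) (α β : A) : ℝ :=
  (X α * Real.exp (-(H α / 2 + t * Y α ^ 2 / 4))) *
    (X β * Real.exp (-(H β / 2 + t * Y β ^ 2 / 4))) * Real.sinh (t / 2 * (Y α * Y β))

theorem two_mul_rotatedKernel_add_sub {H : A → ℝ}
    (hH : ∀ a b, H (a + b) + H (a - b) = 2 * (H a + H b)) (X Y : A →+ ℝ) (t : ℝ) (a b : A) :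
    2 * rotatedKernel H X Y t (a + b) (a - b) =
      (X a ^ 2 - X b ^ 2) * (Real.exp (-H a) * Real.exp (-(H b + t * Y b ^ 2)) -
        Real.exp (-(H a + t * Y a ^ 2)) * Real.exp (-H b)) := by
  calc 2 * rotatedKernel H X Y t (a + b) (a - b)
    _ = X (a + b) * X (a - b) *
        (Real.exp (-(H (a + b) / 2 + t * Y (a + b) ^ 2 / 4)) *
          Real.exp (-(H (a - b) / 2 + t * Y (a - b) ^ 2 / 4)) *
          (2 * Real.sinh (t / 2 * (Y (a + b) * Y (a - b))))) := by
      unfold rotatedKernel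
      ring
    _ = _ := by
      rw [Real.sinh_eq, mul_div_cancel₀ _ two_ne_zero, mul_sub]
      simp only [← Real.exp_add, map_add, map_sub]
      congr 1
      · ring
      · congr 2 <;> linear_combination (-1 / 2) * hH a b

theorem hasSum_mul_of_summable {B C : Type*} {f : B → ℝ} {g : C → ℝ}
    (hf : Summable f) (hg : Summable g) :
    HasSum (fun q : B × C => f q.1 * g q.2) ((∑' b, f b) * ∑' c, g c) :=
  hf.hasSum.mul hg.hasSum (summable_mul_of_summable_norm hf.norm hg.norm)

theorem tsum_sq_mul_exp_neg_add_mul_sq_le [IsAddTorsionFree A] {H : A → ℝ}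
    (hH : ∀ a b, H (a + b) + H (a - b) = 2 * (H a + H b)) (X Y : A →+ ℝ) {t : ℝ} (ht : 0 ≤ t)
    (hw : Summable fun a => Real.exp (-H a)) (hXw : Summable fun a => X a ^ 2 * Real.exp (-H a))
    (hv : Summable fun a => Real.exp (-(H a + t * Y a ^ 2)))
    (hXv : Summable fun a => X a ^ 2 * Real.exp (-(H a + t * Y a ^ 2))) :
    (∑' a, X a ^ 2 * Real.exp (-(H a + t * Y a ^ 2))) * ∑' a, Real.exp (-H a) ≤
      (∑' a, X a ^ 2 * Real.exp (-H a)) * ∑' a, Real.exp (-(H a + t * Y a ^ 2)) := by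
  classical
  have doubled := (((hasSum_mul_of_summable hXw hv).sub (hasSum_mul_of_summable hXv hw)).sub
    (hasSum_mul_of_summable hw hXv)).add (hasSum_mul_of_summable hv hXw)
  have rotated : HasSum (fun q : A × A => rotatedKernel H X Y t (q.1 + q.2) (q.1 - q.2)) _ :=
    (doubled.mul_left (1 / 2)).congr_fun fun q => by
      linear_combination (1 / 2) * two_mul_rotatedKernel_add_sub hH X Y t q.1 q.2
  have rotated_nonneg := hasSum_comp_add_sub_nonneg rotated fun S =>
    sum_sum_ite_eq_mul_sinh_nonneg S _ _ Y (div_nonneg ht zero_le_two)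
  linarith

theorem gibbsMean_sq_add_mul_sq_le [IsAddTorsionFree A] {H : A → ℝ}
    (hH : ∀ a b, H (a + b) + H (a - b) = 2 * (H a + H b)) (X Y : A →+ ℝ) {t : ℝ} (ht : 0 ≤ t)
    (hw : Summable fun a => Real.exp (-H a))
    (hXw : Summable fun a => X a ^ 2 * Real.exp (-H a)) :
    gibbsMean (fun a => H a + t * Y a ^ 2) (fun a => X a ^ 2) ≤
      gibbsMean H fun a => X a ^ 2 := by
  have weight_le (a : A) : Real.exp (-(H a + t * Y a ^ 2)) ≤ Real.exp (-H a) :=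
    Real.exp_le_exp.mpr (neg_le_neg (le_add_of_nonneg_right (by positivity)))
  have hv : Summable fun a => Real.exp (-(H a + t * Y a ^ 2)) :=
    hw.of_nonneg_of_le (fun _ => Real.exp_nonneg _) weight_le
  have hXv : Summable fun a => X a ^ 2 * Real.exp (-(H a + t * Y a ^ 2)) :=
    hXw.of_nonneg_of_le (fun _ => by positivity) fun a =>
      mul_le_mul_of_nonneg_left (weight_le a) (sq_nonneg _)
  unfold gibbsMean
  rw [div_le_div_iff₀ (tsum_exp_neg_pos hv) (tsum_exp_neg_pos hw)]
  exact tsum_sq_mul_exp_neg_add_mul_sq_le hH X Y ht hw hXw hv hXv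

end GibbsMean

section GaussianSummability

variable {V : Type*} [Fintype V]

theorem summable_exp_neg_mul_int_sq {ε : ℝ} (hε : 0 < ε) :
    Summable fun n : ℤ => Real.exp (-(ε * (n : ℝ) ^ 2)) := by
  have summable_nat : Summable fun n : ℕ => Real.exp (-(ε * (n : ℝ) ^ 2)) := by
    simpa only [neg_mul] using Real.summable_exp_nat_mul_of_ge (neg_lt_zero.mpr hε)
      (f := fun n => (n : ℝ) ^ 2) fun n => by exact_mod_cast Nat.le_self_pow two_ne_zero n
  exact Summable.of_nat_of_neg (by simpa using summable_nat) (by simpa using summable_nat)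

theorem summable_pi_prod {ι : Type*} {g : ι → ℝ} (hnn : ∀ n, 0 ≤ g n) (hg : Summable g) :
    Summable fun φ : V → ι => ∏ v, g (φ v) := by
  classical
  refine summable_of_sum_le (c := ∏ _v : V, ∑' n, g n)
    (fun φ => Finset.prod_nonneg fun v _ => hnn _) fun S => ?_
  calc ∑ φ ∈ S, ∏ v, g (φ v)
    _ ≤ ∑ φ ∈ Fintype.piFinset fun v => S.image fun φ => φ v, ∏ v, g (φ v) := by
      refine Finset.sum_le_sum_of_subset_of_nonneg (fun φ hφ => ?_)
        fun φ _ _ => Finset.prod_nonneg fun v _ => hnn _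
      exact Fintype.mem_piFinset.mpr fun v => Finset.mem_image_of_mem (fun φ : V → ι => φ v) hφ
    _ = ∏ v, ∑ n ∈ S.image (fun φ => φ v), g n := (Finset.prod_univ_sum _ _).symm
    _ ≤ ∏ _v : V, ∑' n, g n :=
      Finset.prod_le_prod (fun v _ => Finset.sum_nonneg fun n _ => hnn n)
        fun v _ => hg.sum_le_tsum _ fun n _ => hnn n

theorem summable_exp_neg_mul_sum_sq {ε : ℝ} (hε : 0 < ε) :
    Summable fun φ : V → ℤ => Real.exp (-(ε * ∑ v, (φ v : ℝ) ^ 2)) := by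
  simpa only [← Real.exp_sum, Finset.sum_neg_distrib, ← Finset.mul_sum] using
    summable_pi_prod (V := V) (fun _ => Real.exp_nonneg _) (summable_exp_neg_mul_int_sq hε)

theorem summable_sum_sq_mul_exp_neg_mul_sum_sq {ε : ℝ} (hε : 0 < ε) :
    Summable fun φ : V → ℤ =>
      (∑ v, (φ v : ℝ) ^ 2) * Real.exp (-(ε * ∑ v, (φ v : ℝ) ^ 2)) := by
  refine ((summable_exp_neg_mul_sum_sq (half_pos hε)).mul_left (2 / ε)).of_nonneg_of_le
    (fun φ => by positivity) fun φ => ?_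
  set s := ∑ v, (φ v : ℝ) ^ 2
  have le_exp : s ≤ 2 / ε * Real.exp (ε / 2 * s) := by
    rw [div_mul_eq_mul_div, le_div_iff₀ hε]
    linarith [Real.add_one_le_exp (ε / 2 * s)]
  calc s * Real.exp (-(ε * s))
    _ ≤ 2 / ε * Real.exp (ε / 2 * s) * Real.exp (-(ε * s)) := by gcongr
    _ = 2 / ε * Real.exp (-(ε / 2 * s)) := by
      rw [mul_assoc, ← Real.exp_add]
      ring_nf

theorem exists_addMonoidHom_sq_le_mul_sum_sq (X : (V → ℤ) →+ ℝ) :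
    ∃ C, 0 ≤ C ∧ ∀ φ : V → ℤ, X φ ^ 2 ≤ C * ∑ v, (φ v : ℝ) ^ 2 := by
  classical
  refine ⟨∑ v, X (Pi.single v 1) ^ 2, by positivity, fun φ => ?_⟩
  have expansion : X φ = ∑ v, X (Pi.single v 1) * φ v := by
    conv_lhs => rw [← Finset.univ_sum_single φ]
    rw [map_sum]
    refine Finset.sum_congr rfl fun v _ => ?_
    rw [mul_comm, ← zsmul_eq_mul, ← map_zsmul, ← Pi.single_zsmul, zsmul_one, Int.cast_id]
  rw [expansion]
  exact Finset.sum_mul_sq_le_sq_mul_sq _ _ _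

end GaussianSummability

section Energy

variable {V : Type*} [Fintype V]

/-- The Dirichlet energy `∑_{ij ∈ E} λ_{ij} (φ i - φ j) ^ 2`, that is, `-log (gffWeight c φ)`. -/
noncomputable def gffEnergy (c : V → V → ℝ) (φ : V → ℤ) : ℝ :=
  (1 : ℝ) / 2 * ∑ i : V, ∑ j : V, c i j * ((φ i - φ j : ℤ) : ℝ) ^ 2

theorem gffEnergy_nonneg {c : V → V → ℝ} (hnn : ∀ i j, 0 ≤ c i j) (φ : V → ℤ) :
    0 ≤ gffEnergy c φ :=
  mul_nonneg one_half_pos.le <| Finset.sum_nonneg fun i _ => Finset.sum_nonneg fun j _ =>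
    mul_nonneg (hnn i j) (sq_nonneg _)

theorem gffEnergy_neg (c : V → V → ℝ) (φ : V → ℤ) : gffEnergy c (-φ) = gffEnergy c φ := by
  simp only [gffEnergy, Pi.neg_apply, neg_sub_neg, Int.cast_sub, sub_sq_comm]

theorem gffEnergy_add_add_gffEnergy_sub (c : V → V → ℝ) (φ ψ : V → ℤ) :
    gffEnergy c (φ + ψ) + gffEnergy c (φ - ψ) = 2 * (gffEnergy c φ + gffEnergy c ψ) := by
  simp only [gffEnergy, Finset.mul_sum, ← Finset.sum_add_distrib]
  refine Finset.sum_congr rfl fun i _ => Finset.sum_congr rfl fun j _ => ?_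
  simp only [Pi.add_apply, Pi.sub_apply]
  push_cast
  ring

theorem mul_sub_sq_le_two_mul_gffEnergy {c : V → V → ℝ} (hnn : ∀ i j, 0 ≤ c i j)
    (φ : V → ℤ) (a b : V) : c a b * ((φ a : ℝ) - φ b) ^ 2 ≤ 2 * gffEnergy c φ := by
  have term_nonneg (i j : V) : 0 ≤ c i j * ((φ i - φ j : ℤ) : ℝ) ^ 2 :=
    mul_nonneg (hnn i j) (sq_nonneg _)
  calc c a b * ((φ a : ℝ) - φ b) ^ 2
    _ = c a b * ((φ a - φ b : ℤ) : ℝ) ^ 2 := by push_cast; rfl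
    _ ≤ ∑ j, c a j * ((φ a - φ j : ℤ) : ℝ) ^ 2 :=
      Finset.single_le_sum (f := fun j => c a j * ((φ a - φ j : ℤ) : ℝ) ^ 2)
        (fun j _ => term_nonneg a j) (Finset.mem_univ b)
    _ ≤ ∑ i, ∑ j, c i j * ((φ i - φ j : ℤ) : ℝ) ^ 2 :=
      Finset.single_le_sum (f := fun i => ∑ j, c i j * ((φ i - φ j : ℤ) : ℝ) ^ 2)
        (fun i _ => Finset.sum_nonneg fun j _ => term_nonneg i j) (Finset.mem_univ a)
    _ = 2 * gffEnergy c φ := by rw [gffEnergy]; ring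

theorem exists_sub_sq_le_mul_gffEnergy_of_adj {c : V → V → ℝ} (hnn : ∀ i j, 0 ≤ c i j) {a b : V}
    (hab : (supportGraph c).Adj a b) :
    ∃ M, 0 ≤ M ∧ ∀ φ : V → ℤ, ((φ a : ℝ) - φ b) ^ 2 ≤ M * gffEnergy c φ := by
  have of_pos {a b : V} (h : 0 < c a b) (φ : V → ℤ) :
      ((φ a : ℝ) - φ b) ^ 2 ≤ 2 / c a b * gffEnergy c φ := by
    rw [div_mul_eq_mul_div, le_div_iff₀' h]
    exact mul_sub_sq_le_two_mul_gffEnergy hnn φ a b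
  rcases ((SimpleGraph.fromRel_adj _ _ _).mp hab).2 with h | h
  · exact ⟨2 / c a b, by positivity, of_pos h⟩
  · exact ⟨2 / c b a, by positivity, fun φ => sub_sq_comm (φ a : ℝ) _ ▸ of_pos h φ⟩

theorem exists_sq_le_mul_gffEnergy_of_reachable {c : V → V → ℝ} (hnn : ∀ i j, 0 ≤ c i j)
    {x v : V} (hxv : (supportGraph c).Reachable x v) :
    ∃ M, 0 ≤ M ∧ ∀ φ : V → ℤ, φ x = 0 → (φ v : ℝ) ^ 2 ≤ M * gffEnergy c φ := by
  rw [SimpleGraph.reachable_iff_reflTransGen] at hxv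
  induction hxv with
  | refl => exact ⟨0, le_rfl, fun φ hφ => by simp [hφ]⟩
  | @tail a b _ hab ih =>
    obtain ⟨M, hM₀, hM⟩ := ih
    obtain ⟨N, hN₀, hN⟩ := exists_sub_sq_le_mul_gffEnergy_of_adj hnn hab
    refine ⟨2 * M + 2 * N, by positivity, fun φ hφ => ?_⟩
    linarith [hM φ hφ, hN φ, sq_nonneg ((φ a : ℝ) + (φ a - φ b))]

theorem gffEnergy_eq_gffEnergy_deleteEdge_add [DecidableEq V] (c : V → V → ℝ) (y z : V)
    (φ : V → ℤ) :
    gffEnergy c φ =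
      gffEnergy (deleteEdge c y z) φ + (c y z + c z y) / 2 * ((φ y : ℝ) - φ z) ^ 2 := by
  have term_split (i j : V) : c i j * ((φ i - φ j : ℤ) : ℝ) ^ 2 =
      deleteEdge c y z i j * ((φ i - φ j : ℤ) : ℝ) ^ 2 +
        (if i = y then if j = z then c y z * ((φ y : ℝ) - φ z) ^ 2 else 0 else 0) +
        (if i = z then if j = y then c z y * ((φ y : ℝ) - φ z) ^ 2 else 0 else 0) := by
    unfold deleteEdge
    by_cases hyz : i = y ∧ j = z
    · obtain ⟨rfl, rfl⟩ := hyz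
      by_cases hij : i = j <;> simp [hij]
    by_cases hzy : i = z ∧ j = y
    · obtain ⟨rfl, rfl⟩ := hzy
      by_cases hij : i = j <;> simp [hij, sub_sq_comm]
    simp only [← ite_and, hyz, hzy, or_self, if_false, add_zero]
  simp only [gffEnergy, term_split, Finset.sum_add_distrib, Finset.sum_ite_irrel,
    Finset.sum_ite_eq', Finset.mem_univ, if_true, Finset.sum_const_zero]
  ring

end Energy

section RootedHeights

variable {V : Type*}

/-- The height `φ i` at the vertex `i`, as a real-valued additive observable of `φ`. -/
def heightHom (i : V) : (V → ℤ) →+ ℝ :=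
  (Int.castAddHom ℝ).comp (Pi.evalAddMonoidHom (fun _ => ℤ) i)

/-- The vertices of the connected component of the root, which carry the field. -/
def rootComponent (c : V → V → ℝ) (x : V) : Set V :=
  {v | (supportGraph c).Reachable x v}

/-- The lattice of integer heights that vanish at the root `x` and outside `S`. For
`S = rootComponent c x` its underlying type is, by definition, `GffConfig c x`. -/
def rootedHeights (S : Set V) (x : V) : AddSubgroup (V → ℤ) where
  carrier := {φ | φ x = 0 ∧ ∀ v, v ∉ S → φ v = 0}
  zero_mem' := ⟨rfl, fun _ _ => rfl⟩
  add_mem' hφ hψ := ⟨by simp [hφ.1, hψ.1], fun v hv => by simp [hφ.2 v hv, hψ.2 v hv]⟩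
  neg_mem' hφ := ⟨by simp [hφ.1], fun v hv => by simp [hφ.2 v hv]⟩

theorem rootedHeights_mono {S T : Set V} (hST : S ⊆ T) (x : V) :
    rootedHeights S x ≤ rootedHeights T x :=
  fun _ hφ => ⟨hφ.1, fun v hv => hφ.2 v fun h => hv (hST h)⟩

theorem gffRVar_eq_gibbsMean [Fintype V] (c : V → V → ℝ) (x : V) (f : (V → ℤ) → ℝ) :
    gffRVar c x f =
      gibbsMean (fun φ : rootedHeights (rootComponent c x) x => gffEnergy c φ)
          (fun φ => f φ ^ 2) -
        gibbsMean (fun φ : rootedHeights (rootComponent c x) x => gffEnergy c φ)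
          (fun φ => f φ) ^ 2 :=
  rfl

theorem gffRVar_eq_gibbsMean_sq [Fintype V] (c : V → V → ℝ) (x : V) (X : (V → ℤ) →+ ℝ) :
    gffRVar c x X = gibbsMean (fun φ : rootedHeights (rootComponent c x) x => gffEnergy c φ)
      (fun φ => X φ ^ 2) := by
  have mean_eq_zero : gibbsMean (fun φ : rootedHeights (rootComponent c x) x => gffEnergy c φ)
      (fun φ => X φ) = 0 :=
    gibbsMean_eq_zero_of_odd (fun φ => gffEnergy_neg c φ) fun φ => map_neg X _
  rw [gffRVar_eq_gibbsMean, mean_eq_zero, zero_pow two_ne_zero, sub_zero]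

theorem exists_sum_sq_le_mul_gffEnergy [Fintype V] {c : V → V → ℝ} (hnn : ∀ i j, 0 ≤ c i j)
    (x : V) : ∃ M, 0 < M ∧ ∀ φ ∈ rootedHeights (rootComponent c x) x,
      ∑ v, (φ v : ℝ) ^ 2 ≤ M * gffEnergy c φ := by
  have vertex_bound (v : V) : ∃ M, 0 ≤ M ∧ ∀ φ ∈ rootedHeights (rootComponent c x) x,
      (φ v : ℝ) ^ 2 ≤ M * gffEnergy c φ := by
    by_cases hv : v ∈ rootComponent c x
    · obtain ⟨M, hM₀, hM⟩ := exists_sq_le_mul_gffEnergy_of_reachable hnn hv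
      exact ⟨M, hM₀, fun φ hφ => hM φ hφ.1⟩
    · exact ⟨0, le_rfl, fun φ hφ => by simp [hφ.2 v hv]⟩
  choose M hM₀ hM using vertex_bound
  have sum_nonneg : 0 ≤ ∑ v, M v := Finset.sum_nonneg fun v _ => hM₀ v
  refine ⟨∑ v, M v + 1, by positivity, fun φ hφ => ?_⟩
  calc ∑ v, (φ v : ℝ) ^ 2
    _ ≤ ∑ v, M v * gffEnergy c φ := Finset.sum_le_sum fun v _ => hM v φ hφ
    _ = (∑ v, M v) * gffEnergy c φ := (Finset.sum_mul _ _ _).symm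
    _ ≤ (∑ v, M v + 1) * gffEnergy c φ :=
      mul_le_mul_of_nonneg_right (by linarith) (gffEnergy_nonneg hnn φ)

theorem summable_exp_neg_gffEnergy [Fintype V] {c : V → V → ℝ} (hnn : ∀ i j, 0 ≤ c i j) (x : V) :
    Summable fun φ : rootedHeights (rootComponent c x) x => Real.exp (-gffEnergy c φ) := by
  obtain ⟨M, hM₀, hM⟩ := exists_sum_sq_le_mul_gffEnergy hnn x
  refine ((summable_exp_neg_mul_sum_sq (inv_pos.mpr hM₀)).comp_injective
    Subtype.val_injective).of_nonneg_of_le (fun _ => Real.exp_nonneg _) fun φ => ?_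
  exact Real.exp_le_exp.mpr (neg_le_neg ((inv_mul_le_iff₀ hM₀).mpr (hM φ φ.2)))

theorem summable_sq_mul_exp_neg_gffEnergy [Fintype V] {c : V → V → ℝ} (hnn : ∀ i j, 0 ≤ c i j)
    (x : V) (X : (V → ℤ) →+ ℝ) :
    Summable fun φ : rootedHeights (rootComponent c x) x =>
      X φ ^ 2 * Real.exp (-gffEnergy c φ) := by
  obtain ⟨M, hM₀, hM⟩ := exists_sum_sq_le_mul_gffEnergy hnn x
  obtain ⟨C, hC₀, hC⟩ := exists_addMonoidHom_sq_le_mul_sum_sq X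
  refine (((summable_sum_sq_mul_exp_neg_mul_sum_sq (inv_pos.mpr hM₀)).mul_left C).comp_injective
    Subtype.val_injective).of_nonneg_of_le (fun _ => by positivity) fun φ => ?_
  rw [Function.comp_apply, ← mul_assoc]
  gcongr
  · exact hC φ
  · exact (inv_mul_le_iff₀ hM₀).mpr (hM φ φ.2)

open scoped Classical in
/-- Splits heights on `T` into their values on `S ⊆ T` and their values on `T \ S` relative to
the height at a vertex `y` of `S`. -/
noncomputable def rootedHeightsProdEquiv {S T : Set V} {x y : V} (hST : S ⊆ T) (hx : x ∈ S)
    (hy : y ∈ S) : rootedHeights S x × rootedHeights (T \ S) x ≃ rootedHeights T x where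
  toFun q := ⟨q.1 + q.2 + (T \ S).indicator fun _ => q.1.1 y, by
    simp [q.1.2.1, q.2.2.1, hx], fun v hv => by
      have hvS : v ∉ S := fun h => hv (hST h)
      simp [q.1.2.2 v hvS, q.2.2.2 v (fun h => hv h.1), hv]⟩
  invFun φ := (⟨S.indicator φ.1, by simp [φ.2.1], fun _ hv => Set.indicator_of_notMem hv _⟩,
    ⟨(T \ S).indicator fun v => φ.1 v - φ.1 y, by simp [hx],
      fun _ hv => Set.indicator_of_notMem hv _⟩)
  left_inv := by
    rintro ⟨⟨a, ha⟩, ⟨b, hb⟩⟩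
    ext v
    · by_cases hv : v ∈ S
      · simp [hv, hb.2 v (fun h => h.2 hv)]
      · simp [hv, ha.2 v hv]
    · have hby : b y = 0 := hb.2 y fun h => h.2 hy
      by_cases hv : v ∈ T \ S
      · simp [hv.1, hv.2, ha.2 v hv.2, hy, hby]
      · simp [hv, hb.2 v hv]
  right_inv := by
    rintro ⟨φ, hφ⟩
    ext v
    by_cases hvS : v ∈ S
    · simp [hvS, hST hvS, hy]
    · by_cases hvT : v ∈ T
      · simp [hvS, hvT, hy]
      · simp [hvS, hvT, hφ.2 v hvT]

theorem rootedHeightsProdEquiv_apply_of_mem {S T : Set V} {x y : V} (hST : S ⊆ T) (hx : x ∈ S)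
    (hy : y ∈ S) (q : rootedHeights S x × rootedHeights (T \ S) x) {v : V} (hv : v ∈ S) :
    (rootedHeightsProdEquiv hST hx hy q).1 v = q.1.1 v := by
  simp [rootedHeightsProdEquiv, hv, q.2.2.2 v fun h => h.2 hv]

theorem rootedHeightsProdEquiv_apply_of_mem_diff {S T : Set V} {x y : V} (hST : S ⊆ T)
    (hx : x ∈ S) (hy : y ∈ S) (q : rootedHeights S x × rootedHeights (T \ S) x) {v : V}
    (hv : v ∈ T \ S) : (rootedHeightsProdEquiv hST hx hy q).1 v = q.2.1 v + q.1.1 y := by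
  simp [rootedHeightsProdEquiv, hv.1, hv.2, q.1.2.2 v hv.2]

end RootedHeights

section DeleteEdge

variable {V : Type*}

theorem mem_rootComponent_iff_of_ne_zero {c : V → V → ℝ} (hnn : ∀ i j, 0 ≤ c i j) (x : V)
    {k l : V} (hkl : c k l ≠ 0) : k ∈ rootComponent c x ↔ l ∈ rootComponent c x := by
  rcases eq_or_ne k l with rfl | hne
  · rfl
  have adj : (supportGraph c).Adj k l :=
    (SimpleGraph.fromRel_adj _ _ _).mpr ⟨hne, Or.inl ((hnn k l).lt_of_ne' hkl)⟩
  exact ⟨fun hk => hk.trans adj.reachable, fun hl => hl.trans adj.symm.reachable⟩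

variable [DecidableEq V]

theorem deleteEdge_comm (c : V → V → ℝ) (y z : V) : deleteEdge c y z = deleteEdge c z y := by
  funext a b
  simp only [deleteEdge, or_comm]

theorem deleteEdge_nonneg {c : V → V → ℝ} (hnn : ∀ i j, 0 ≤ c i j) (y z i j : V) :
    0 ≤ deleteEdge c y z i j := by
  unfold deleteEdge
  split_ifs
  exacts [le_rfl, hnn i j]

theorem supportGraph_deleteEdge (c : V → V → ℝ) (y z : V) :
    supportGraph (deleteEdge c y z) = (supportGraph c).deleteEdges {s(y, z)} := by
  ext a b
  simp only [supportGraph, SimpleGraph.fromRel_adj, SimpleGraph.deleteEdges_adj, deleteEdge,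
    Set.mem_singleton_iff, Sym2.eq_iff]
  grind

theorem rootComponent_deleteEdge_subset (c : V → V → ℝ) (x y z : V) :
    rootComponent (deleteEdge c y z) x ⊆ rootComponent c x := fun _ hv =>
  hv.mono (supportGraph_deleteEdge c y z ▸ SimpleGraph.deleteEdges_le _)

theorem rootComponent_deleteEdge_eq {c : V → V → ℝ} {x y z : V}
    (hyz : y ∈ rootComponent (deleteEdge c y z) x ↔ z ∈ rootComponent (deleteEdge c y z) x) :
    rootComponent (deleteEdge c y z) x = rootComponent c x := by
  refine (rootComponent_deleteEdge_subset c x y z).antisymm fun v hv => ?_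
  have path := (SimpleGraph.reachable_iff_reflTransGen x v).mp hv
  clear hv
  induction path with
  | refl => exact SimpleGraph.Reachable.refl x
  | @tail a b _ hab ha =>
    by_cases hedge : s(a, b) = s(y, z)
    · rcases Sym2.eq_iff.mp hedge with ⟨rfl, rfl⟩ | ⟨rfl, rfl⟩
      exacts [hyz.mp ha, hyz.mpr ha]
    · have adj : (supportGraph (deleteEdge c y z)).Adj a b := by
        rw [supportGraph_deleteEdge]
        exact SimpleGraph.deleteEdges_adj.mpr ⟨hab, hedge⟩
      exact ha.trans adj.reachable

theorem mul_sub_sq_rootedHeightsProdEquiv {c : V → V → ℝ} (hnn : ∀ i j, 0 ≤ c i j) {x y z : V}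
    (hy : y ∈ rootComponent (deleteEdge c y z) x)
    (hz : z ∉ rootComponent (deleteEdge c y z) x)
    (q : rootedHeights (rootComponent (deleteEdge c y z) x) x ×
      rootedHeights (rootComponent c x \ rootComponent (deleteEdge c y z) x) x) (k l : V) :
    let φ : V → ℤ := rootedHeightsProdEquiv (rootComponent_deleteEdge_subset c x y z)
      (SimpleGraph.Reachable.refl x) hy q
    c k l * ((φ k - φ l : ℤ) : ℝ) ^ 2 =
      deleteEdge c y z k l * ((q.1.1 k - q.1.1 l : ℤ) : ℝ) ^ 2 +
        c k l * ((q.2.1 k - q.2.1 l : ℤ) : ℝ) ^ 2 := by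
  obtain ⟨⟨a, ha⟩, ⟨b, hb⟩⟩ := q
  intro φ
  have φ_of_mem {v : V} (hv : v ∈ rootComponent (deleteEdge c y z) x) : φ v = a v :=
    rootedHeightsProdEquiv_apply_of_mem _ _ hy _ hv
  have φ_of_mem_diff {v : V} (hvc : v ∈ rootComponent c x)
      (hv : v ∉ rootComponent (deleteEdge c y z) x) : φ v = b v + a y :=
    rootedHeightsProdEquiv_apply_of_mem_diff _ _ hy _ ⟨hvc, hv⟩
  have φ_of_notMem {v : V} (hv : v ∉ rootComponent c x) : φ v = 0 :=
    (rootedHeightsProdEquiv _ _ _ _).2.2 v hv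
  have b_of_mem {v : V} (hv : v ∈ rootComponent (deleteEdge c y z) x) : b v = 0 :=
    hb.2 v fun h => h.2 hv
  rcases eq_or_ne (c k l) 0 with hc | hc
  · simp [deleteEdge, hc]
  have hkl := mem_rootComponent_iff_of_ne_zero hnn x hc
  by_cases bridge : (k = y ∧ l = z) ∨ (k = z ∧ l = y)
  · have hyc := rootComponent_deleteEdge_subset c x y z hy
    have hd : deleteEdge c y z k l = 0 := if_pos bridge
    rcases bridge with ⟨rfl, rfl⟩ | ⟨rfl, rfl⟩
    · simp [hd, φ_of_mem hy, φ_of_mem_diff (hkl.mp hyc) hz, b_of_mem hy]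
    · simp [hd, φ_of_mem hy, φ_of_mem_diff (hkl.mpr hyc) hz, b_of_mem hy]
  have hd : deleteEdge c y z k l = c k l := if_neg bridge
  have hkl' := mem_rootComponent_iff_of_ne_zero (deleteEdge_nonneg hnn y z) x (hd.trans_ne hc)
  rw [hd]
  by_cases hk : k ∈ rootComponent (deleteEdge c y z) x
  · have hl := hkl'.mp hk
    simp [φ_of_mem hk, φ_of_mem hl, b_of_mem hk, b_of_mem hl]
  have hl := hkl'.not.mp hk
  by_cases hkc : k ∈ rootComponent c x
  · simp [φ_of_mem_diff hkc hk, φ_of_mem_diff (hkl.mp hkc) hl, ha.2 k hk, ha.2 l hl]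
  · simp [φ_of_notMem hkc, φ_of_notMem (hkl.not.mp hkc), ha.2 k hk, ha.2 l hl,
      hb.2 k fun h => hkc h.1, hb.2 l fun h => hkc (hkl.mpr h.1)]

variable [Fintype V]

theorem gffRVar_le_gffRVar_deleteEdge_of_rootComponent_eq {c : V → V → ℝ}
    (hnn : ∀ i j, 0 ≤ c i j) {x y z : V}
    (hcomp : rootComponent (deleteEdge c y z) x = rootComponent c x) (X : (V → ℤ) →+ ℝ) :
    gffRVar c x X ≤ gffRVar (deleteEdge c y z) x X := by
  have energy_eq (φ : V → ℤ) : gffEnergy c φ = gffEnergy (deleteEdge c y z) φ +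
      (c y z + c z y) / 2 * (heightHom y - heightHom z) φ ^ 2 :=
    gffEnergy_eq_gffEnergy_deleteEdge_add c y z φ
  have hnn' := deleteEdge_nonneg hnn y z
  let ι := (rootedHeights (rootComponent (deleteEdge c y z) x) x).subtype
  rw [gffRVar_eq_gibbsMean_sq, gffRVar_eq_gibbsMean_sq, ← hcomp]
  simp only [energy_eq]
  exact gibbsMean_sq_add_mul_sq_le
    (A := rootedHeights (rootComponent (deleteEdge c y z) x) x)
    (fun φ ψ => gffEnergy_add_add_gffEnergy_sub _ (φ : V → ℤ) (ψ : V → ℤ))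
    (X.comp ι) ((heightHom y - heightHom z).comp ι)
    (div_nonneg (add_nonneg (hnn y z) (hnn z y)) zero_le_two)
    (summable_exp_neg_gffEnergy hnn' x) (summable_sq_mul_exp_neg_gffEnergy hnn' x X)

theorem gffEnergy_rootedHeightsProdEquiv {c : V → V → ℝ} (hnn : ∀ i j, 0 ≤ c i j) {x y z : V}
    (hy : y ∈ rootComponent (deleteEdge c y z) x)
    (hz : z ∉ rootComponent (deleteEdge c y z) x)
    (q : rootedHeights (rootComponent (deleteEdge c y z) x) x ×
      rootedHeights (rootComponent c x \ rootComponent (deleteEdge c y z) x) x) :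
    gffEnergy c (rootedHeightsProdEquiv (rootComponent_deleteEdge_subset c x y z)
        (SimpleGraph.Reachable.refl x) hy q) =
      gffEnergy (deleteEdge c y z) q.1 + gffEnergy c q.2 := by
  simp only [gffEnergy, ← mul_add, ← Finset.sum_add_distrib]
  congr 1
  exact Finset.sum_congr rfl fun k _ => Finset.sum_congr rfl fun l _ =>
    mul_sub_sq_rootedHeightsProdEquiv hnn hy hz q k l

theorem gffRVar_eq_gffRVar_deleteEdge_of_bridge {c : V → V → ℝ} (hnn : ∀ i j, 0 ≤ c i j)
    {x y z : V} (hy : y ∈ rootComponent (deleteEdge c y z) x)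
    (hz : z ∉ rootComponent (deleteEdge c y z) x) {X : (V → ℤ) →+ ℝ}
    (hX : ∀ φ : V → ℤ, (∀ v ∈ rootComponent (deleteEdge c y z) x, φ v = 0) → X φ = 0) :
    gffRVar c x X = gffRVar (deleteEdge c y z) x X := by
  let e := rootedHeightsProdEquiv (rootComponent_deleteEdge_subset c x y z)
    (SimpleGraph.Reachable.refl x) hy
  have observable_eq (q) : X (e q) = X q.1 := by
    have vanishes : X (e q - q.1) = 0 := hX _ fun v hv =>
      sub_eq_zero.mpr (rootedHeightsProdEquiv_apply_of_mem _ _ hy q hv)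
    rwa [map_sub, sub_eq_zero] at vanishes
  have summable_outside : Summable fun φ : rootedHeights
      (rootComponent c x \ rootComponent (deleteEdge c y z) x) x => Real.exp (-gffEnergy c φ) :=
    (summable_exp_neg_gffEnergy hnn x).comp_injective (i := AddSubgroup.inclusion _)
      (AddSubgroup.inclusion_injective (rootedHeights_mono Set.sdiff_subset x))
  have hnn' := deleteEdge_nonneg hnn y z
  rw [gffRVar_eq_gibbsMean_sq, gffRVar_eq_gibbsMean_sq, ← gibbsMean_comp_equiv e]
  simp only [observable_eq, e, gffEnergy_rootedHeightsProdEquiv hnn hy hz]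
  exact gibbsMean_prod_fst (summable_exp_neg_gffEnergy hnn' x)
    (summable_sq_mul_exp_neg_gffEnergy hnn' x X) summable_outside

theorem gffRVar_le_gffRVar_deleteEdge {c : V → V → ℝ} (hnn : ∀ i j, 0 ≤ c i j) {x y z : V}
    {X : (V → ℤ) →+ ℝ}
    (hX : ∀ φ : V → ℤ, (∀ v ∈ rootComponent (deleteEdge c y z) x, φ v = 0) → X φ = 0) :
    gffRVar c x X ≤ gffRVar (deleteEdge c y z) x X := by
  by_cases hy : y ∈ rootComponent (deleteEdge c y z) x <;>
    by_cases hz : z ∈ rootComponent (deleteEdge c y z) x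
  · exact gffRVar_le_gffRVar_deleteEdge_of_rootComponent_eq hnn
      (rootComponent_deleteEdge_eq (iff_of_true hy hz)) X
  · exact (gffRVar_eq_gffRVar_deleteEdge_of_bridge hnn hy hz hX).le
  · rw [deleteEdge_comm] at hX hy hz ⊢
    exact (gffRVar_eq_gffRVar_deleteEdge_of_bridge hnn hz hy hX).le
  · exact gffRVar_le_gffRVar_deleteEdge_of_rootComponent_eq hnn
      (rootComponent_deleteEdge_eq (iff_of_false hy hz)) X

end DeleteEdge

theorem gff_variance_monotone_edge_deletion_general {V : Type*} [Fintype V] [DecidableEq V]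
    (x : V) (c : V → V → ℝ) (hnn : ∀ i j, 0 ≤ c i j) (y z : V) :
    (∀ i : V, gffVar1 c x i ≤ gffVar1 (deleteEdge c y z) x i) ∧
      (∀ i j : V, gffVar2 c x i j ≤ gffVar2 (deleteEdge c y z) x i j) := by
  have reachable {v : V} (hv : (supportGraph (deleteEdge c y z)).Reachable x v) :
      (supportGraph c).Reachable x v := rootComponent_deleteEdge_subset c x y z hv
  refine ⟨fun i => ?_, fun i j => ?_⟩
  · by_cases hi : (supportGraph (deleteEdge c y z)).Reachable x i
    · rw [gffVar1, gffVar1, if_pos hi, if_pos (reachable hi)]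
      exact ENNReal.ofReal_le_ofReal <| gffRVar_le_gffRVar_deleteEdge hnn (X := heightHom i)
        fun φ hφ => by simp [heightHom, hφ i hi]
    · rw [gffVar1, gffVar1, if_neg hi]
      exact le_top
  · by_cases hij : (supportGraph (deleteEdge c y z)).Reachable x i ∧
        (supportGraph (deleteEdge c y z)).Reachable x j
    · rw [gffVar2, gffVar2, if_pos hij, if_pos (hij.imp reachable reachable)]
      exact ENNReal.ofReal_le_ofReal <| gffRVar_le_gffRVar_deleteEdge hnn
        (X := heightHom i - heightHom j) fun φ hφ => by
          simp [heightHom, hφ i hij.1, hφ j hij.2]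
    · rw [gffVar2, gffVar2, if_neg hij]
      exact le_top

/-- **Monotonicity under deletion of edges.**
Let `G = (V,E,x)` be a finite connected rooted graph with conductances `c ∈ (0,∞)^E`
(encoded as a symmetric nonnegative function whose support graph is connected), and let
`yz ∈ E` be an edge. Deleting the edge `yz` increases the variance of every height
`φ(i)` and of every height difference `φ(i) − φ(j)` (with the convention that the
variance is `+∞` at vertices disconnected from the root). -/
theorem gff_variance_monotone_edge_deletion
    {V : Type*} [Fintype V] [DecidableEq V] (x : V) (c : V → V → ℝ)
    (hsym : ∀ i j, c i j = c j i) (hnn : ∀ i j, 0 ≤ c i j)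
    (hconn : (supportGraph c).Connected)
    (y z : V) (hyz : y ≠ z) (hedge : 0 < c y z) :
    (∀ i : V, gffVar1 c x i ≤ gffVar1 (deleteEdge c y z) x i) ∧
      (∀ i j : V, gffVar2 c x i j ≤ gffVar2 (deleteEdge c y z) x i j) :=
  gff_variance_monotone_edge_deletion_general x c hnn y z
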